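/- For every integer n ≥ 2 and every real ρ > 0, A(ρ) = (2/(n-1)) S_{n,2}(ρ) + S_{n,1}(ρ) = e^{-2ρ} ((n+1) + (n-1) e^{-2ρ}) / (1 - e^{-2ρ})^{n+1}. -/

import Mathlib

/-- `S n m ρ = Σ_{l=1}^∞ C(l+n-2, l) · l^m · e^{-2ρl}`. -/
noncomputable def S (n : ℕ) (m : ℤ) (ρ : ℝ) : ℝ :=
  ∑' l : ℕ, (Nat.choose (l + 1 + n - 2) (l + 1) : ℝ) * ((l : ℝ) + 1) ^ m *
    Real.exp (-2 * ρ * ((l : ℝ) + 1))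

/-- `A(ρ) = (2/(n-1)) S_{n,2}(ρ) + S_{n,1}(ρ)`. -/
noncomputable def A (n : ℕ) (ρ : ℝ) : ℝ :=
  2 / ((n : ℝ) - 1) * S n 2 ρ + S n 1 ρ

/-!
Absorbing one factor `l` into the binomial coefficient, `l C(l+n-2, l) = (n-1) C(l+n-2, n-1)`, and
shifting the index by one turns `S_{n,m}` into `(n-1) x ∑_{l ≥ 0} C(l+n-1, n-1) (l+1)^(m-1) x^l`
with `x = e^{-2ρ}`. For `m = 1` this is the negative binomial series; for `m = 2` the remaining
factor `l+1` is absorbed the same way, leaving two negative binomial series.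
-/

theorem add_choose_succ_mul_succ (k l : ℕ) :
    (l + k).choose (l + 1) * (l + 1) = k * (l + k).choose k := by
  rw [Nat.choose_succ_right_eq, Nat.choose_symm_add, Nat.add_sub_cancel_left, mul_comm]

theorem succ_mul_add_choose_add_mul_add_choose (k l : ℕ) :
    (l + 1) * (l + k).choose k + k * (l + k).choose k =
      (k + 1) * (l + (k + 1)).choose (k + 1) := by
  linear_combination Nat.add_one_mul_choose_eq (l + k) k

theorem hasSum_succ_mul_choose_mul_geometric_of_norm_lt_one {𝕜 : Type*} [NormedDivisionRing 𝕜]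
    [HasSummableGeomSeries 𝕜] (k : ℕ) {r : 𝕜} (hr : ‖r‖ < 1) :
    HasSum (fun l : ℕ ↦ ((l : 𝕜) + 1) * (l + k).choose k * r ^ l)
      ((1 + k * r) / (1 - r) ^ (k + 2)) := by
  have hr_ne : 1 - r ≠ 0 := sub_ne_zero.mpr (ne_of_apply_ne norm (by simpa using hr.ne'))
  have absorb (l : ℕ) : ((l : 𝕜) + 1) * (l + k).choose k =
      (k + 1) * (l + (k + 1)).choose (k + 1) - k * (l + k).choose k :=
    eq_sub_of_add_eq <|
      mod_cast congrArg (Nat.cast (R := 𝕜)) (succ_mul_add_choose_add_mul_add_choose k l)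
  have numerator_eq : 1 + k * r = ((k : 𝕜) + 1) - k * (1 - r) := by noncomm_ring
  have cancel : (1 - r) / (1 - r) ^ (k + 2) = 1 / (1 - r) ^ (k + 1) := by
    rw [pow_succ _ (k + 1), div_eq_mul_inv, mul_inv_rev, mul_inv_cancel_left₀ hr_ne, one_div]
  convert! ((hasSum_choose_mul_geometric_of_norm_lt_one (k + 1) hr).mul_left ((k : 𝕜) + 1)).sub
    ((hasSum_choose_mul_geometric_of_norm_lt_one k hr).mul_left (k : 𝕜)) using 1
  · funext l
    rw [absorb, sub_mul, mul_assoc, mul_assoc]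
  · rw [numerator_eq, sub_div, mul_div_assoc, cancel, mul_one_div, mul_one_div]

theorem S_succ_eq_mul_tsum (k : ℕ) (m : ℤ) (ρ : ℝ) :
    S (k + 1) m ρ = k * Real.exp (-2 * ρ) *
      ∑' l : ℕ, ((l : ℝ) + 1) ^ (m - 1) * ((l + k).choose k : ℝ) * Real.exp (-2 * ρ) ^ l := by
  rw [S, ← tsum_mul_left]
  refine tsum_congr fun l ↦ ?_
  have absorb : ((l + k).choose (l + 1) : ℝ) * ((l : ℝ) + 1) = k * (l + k).choose k :=
    mod_cast add_choose_succ_mul_succ k l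
  have split_pow : ((l : ℝ) + 1) ^ m = ((l : ℝ) + 1) * ((l : ℝ) + 1) ^ (m - 1) := by
    rw [← zpow_one_add₀ (by positivity), add_sub_cancel]
  have exp_eq : Real.exp (-2 * ρ * ((l : ℝ) + 1)) = Real.exp (-2 * ρ) ^ (l + 1) := by
    rw [← Real.exp_nat_mul, Nat.cast_add_one, mul_comm]
  rw [show l + 1 + (k + 1) - 2 = l + k by omega, split_pow, exp_eq]
  linear_combination ((l : ℝ) + 1) ^ (m - 1) * Real.exp (-2 * ρ) ^ (l + 1) * absorb

theorem norm_exp_neg_two_mul_lt_one {ρ : ℝ} (hρ : 0 < ρ) : ‖Real.exp (-2 * ρ)‖ < 1 := by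
  rw [Real.norm_of_nonneg (Real.exp_nonneg _), Real.exp_lt_one_iff]
  linarith

theorem S_succ_one (k : ℕ) {ρ : ℝ} (hρ : 0 < ρ) :
    S (k + 1) 1 ρ = k * Real.exp (-2 * ρ) / (1 - Real.exp (-2 * ρ)) ^ (k + 1) := by
  have hsum := tsum_choose_mul_geometric_of_norm_lt_one k (norm_exp_neg_two_mul_lt_one hρ)
  simp only [S_succ_eq_mul_tsum, sub_self, zpow_zero, one_mul, hsum, mul_one_div]

theorem S_succ_two (k : ℕ) {ρ : ℝ} (hρ : 0 < ρ) :
    S (k + 1) 2 ρ = k * Real.exp (-2 * ρ) * (1 + k * Real.exp (-2 * ρ)) /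
      (1 - Real.exp (-2 * ρ)) ^ (k + 2) := by
  have hsum := (hasSum_succ_mul_choose_mul_geometric_of_norm_lt_one k
    (norm_exp_neg_two_mul_lt_one hρ)).tsum_eq
  rw [S_succ_eq_mul_tsum, show (2 : ℤ) - 1 = 1 by norm_num]
  simp only [zpow_one, hsum, mul_div_assoc]

theorem stmt_4 (n : ℕ) (hn : 2 ≤ n) (ρ : ℝ) (hρ : 0 < ρ) :
    A n ρ = Real.exp (-2 * ρ) * (((n : ℝ) + 1) + ((n : ℝ) - 1) * Real.exp (-2 * ρ)) /
      (1 - Real.exp (-2 * ρ)) ^ (n + 1) := by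
  obtain ⟨k, rfl⟩ : ∃ k, n = k + 1 := ⟨n - 1, by omega⟩
  have hk : (k : ℝ) ≠ 0 := Nat.cast_ne_zero.mpr (by omega)
  have hx : 1 - Real.exp (-2 * ρ) ≠ 0 :=
    sub_ne_zero.mpr (Real.exp_lt_one_iff.mpr (by linarith)).ne'
  rw [A, S_succ_two k hρ, S_succ_one k hρ]
  push_cast
  rw [add_sub_cancel_right]
  generalize Real.exp (-2 * ρ) = x at hx ⊢
  field_simp
  ring
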